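/- Let G be a subgroup of the general linear group GL_n(ℂ) acting on ℂⁿ by matrix-vector multiplication. If for every vector v ∈ ℂⁿ the orbit {g • v : g ∈ G} is a finite set, then the group G is finite. -/

import Mathlib

theorem finite_of_forall_orbit_finite_general {R R' M N : Type*} [Semiring R] [Semiring R']
    {σ : R →+* R'} [AddCommMonoid M] [AddCommMonoid N] [Module R M] [Module R' N]
    {s : Set M} (hs : s.Finite) (hspan : Submodule.span R s = ⊤) {S : Set (M →ₛₗ[σ] N)}
    (h : ∀ v ∈ s, ((fun f : M →ₛₗ[σ] N ↦ f v) '' S).Finite) : S.Finite := by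
  have : Finite s := hs.to_subtype
  let restrict (f : M →ₛₗ[σ] N) (v : s) : N := f v
  have restrict_injective : Function.Injective restrict := fun f g hfg ↦
    LinearMap.ext_on hspan fun v hv ↦ congrFun hfg ⟨v, hv⟩
  have finite_restrict_image : (restrict '' S).Finite := by
    refine (Set.Finite.pi' fun v : s ↦ h v v.2).subset ?_
    rintro _ ⟨f, hf, rfl⟩ v
    exact ⟨f, hf, rfl⟩
  exact finite_restrict_image.of_finite_image restrict_injective.injOn

/-- If every orbit of a subgroup `G ⊆ GL_n(ℂ)` on `ℂⁿ` (acting by matrix-vector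
multiplication) is finite, then `G` is finite. -/
theorem finite_of_forall_orbit_finite (n : ℕ) (G : Subgroup (GL (Fin n) ℂ))
    (h : ∀ v : Fin n → ℂ,
      {w : Fin n → ℂ | ∃ g ∈ G, (g : Matrix (Fin n) (Fin n) ℂ).mulVec v = w}.Finite) :
    (G : Set (GL (Fin n) ℂ)).Finite := by
  have finite_toLin'_image : ((fun g : GL (Fin n) ℂ ↦ Matrix.toLin' g.val) '' G).Finite :=
    finite_of_forall_orbit_finite_general (Set.finite_range _) (Pi.basisFun ℂ (Fin n)).span_eq
      fun v _ ↦ by rw [Set.image_image]; exact h v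
  exact finite_toLin'_image.of_finite_image (Matrix.toLin'.injective.comp Units.val_injective).injOn
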